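/- Let α be a primitive element of F_{q^n}, let F_{q^r} be a subfield of F_{q^n}, let t ≥ 2, and let 1 ≤ l < (q^n − 1)/(q^r − 1). Suppose U = ⊕_{i=0}^{t−1} α^{li}F_{q^r}, i.e., U is the direct sum of the F_q-subspaces α^{li}F_{q^r} for i = 0, …, t−1, and suppose F_{q^r} is the best friend of U. Then d_S(orb(U)) = 2r. -/

import Mathlib

/-- The subspace `Uγ = {uγ : u ∈ U}` of the `F`-vector space `K`. -/
def mulMap (F K : Type) [Field F] [Field K] [Algebra F K] (γ : K) (U : Submodule F K) :
    Submodule F K :=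
  U.map (LinearMap.mulRight F γ)

/-- The cyclic orbit code `orb(U) = {Uγ : γ ∈ K^*}`. -/
def orb (F K : Type) [Field F] [Field K] [Algebra F K] (U : Submodule F K) :
    Set (Submodule F K) :=
  {V : Submodule F K | ∃ γ : K, γ ≠ 0 ∧ V = mulMap F K γ U}

/-- A subfield `E` of `K` (containing `F`) is a friend of `U` if `U` is a vector space
over `E`, i.e. `c * u ∈ U` for all `c ∈ E`, `u ∈ U`. -/
def IsFriend (F K : Type) [Field F] [Field K] [Algebra F K] (E : IntermediateField F K)
    (U : Submodule F K) : Prop :=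
  ∀ c ∈ E, ∀ u ∈ U, c * u ∈ U

/-- The subspace distance `d_S(V,W) = dim V + dim W − 2 dim (V ∩ W)`. -/
noncomputable def sdist (F : Type) [Field F] {M : Type} [AddCommGroup M] [Module F M]
    (V W : Submodule F M) : ℕ :=
  Module.finrank F ↥V + Module.finrank F ↥W - 2 * Module.finrank F ↥(V ⊓ W)

/-- The subspace distance of a code: `d_S(C) = min {d_S(V,W) : V,W ∈ C, V ≠ W}`. -/
noncomputable def cdist (F : Type) [Field F] {M : Type} [AddCommGroup M] [Module F M]
    (C : Set (Submodule F M)) : ℕ :=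
  sInf {d : ℕ | ∃ V ∈ C, ∃ W ∈ C, V ≠ W ∧ d = sdist F V W}

/-!
Write `β = α ^ l`. All members of the orbit are `E`-subspaces of one common dimension, so the
intersection of two distinct members has codimension a positive multiple of `r = [E : F]` in each;
hence every distance is at least `2r` (`two_mul_le_sdist`). The value `2r` is attained by the pair
`U`, `Uβ`: since `Uβ ≤ U + β ^ t E`, the sum `U + Uβ` has dimension at most `dim U + r`, so the
distance is at most `2r` (`sdist_le_of_le_sup`). Finally `Uβ ≠ U`: otherwise `β` lies in the field
of all multipliers of `U` (`multipliers`), which equals `E` because `E` is the best friend, and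
`β ∈ E` makes the first two summands `E` and `βE` coincide.
-/

lemma mem_mulMap {F K : Type} [Field F] [Field K] [Algebra F K] {γ : K} {U : Submodule F K}
    {x : K} : x ∈ mulMap F K γ U ↔ ∃ u ∈ U, u * γ = x := by
  simp [mulMap, Submodule.mem_map]

lemma finrank_mulMap {F K : Type} [Field F] [Field K] [Algebra F K] {γ : K} (hγ : γ ≠ 0)
    (U : Submodule F K) : Module.finrank F (mulMap F K γ U) = Module.finrank F U :=
  (Submodule.equivMapOfInjective (LinearMap.mulRight F γ) (mul_left_injective₀ hγ) U).finrank_eq.symm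

lemma IsFriend.mulMap {F K : Type} [Field F] [Field K] [Algebra F K] {E : IntermediateField F K}
    {U : Submodule F K} (h : IsFriend F K E U) (γ : K) : IsFriend F K E (mulMap F K γ U) := by
  intro c hc x hx
  obtain ⟨u, hu, rfl⟩ := mem_mulMap.1 hx
  exact mem_mulMap.2 ⟨c * u, h c hc u hu, mul_assoc _ _ _⟩

/-- A subspace with friend `E` is an `E`-vector space, so the tower law applies to it. -/
lemma IsFriend.finrank_dvd {F K : Type} [Field F] [Field K] [Algebra F K]
    {E : IntermediateField F K} {U : Submodule F K} (h : IsFriend F K E U) :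
    Module.finrank F E ∣ Module.finrank F U := by
  let V : Submodule E K :=
    { U.toAddSubmonoid with smul_mem' := fun c u hu => h c c.2 u hu }
  have e : V.restrictScalars F = U := by ext; rfl
  have h1 : Module.finrank F E * Module.finrank E V = Module.finrank F V :=
    Module.finrank_mul_finrank F E V
  have h2 : Module.finrank F U = Module.finrank F V :=
    congrArg (fun W : Submodule F K => Module.finrank F W) e.symm
  exact ⟨_, h2.trans h1.symm⟩

lemma two_mul_le_sdist {F K : Type} [Field F] [Field K] [Algebra F K] [FiniteDimensional F K]
    {E : IntermediateField F K} {V W : Submodule F K} (hV : IsFriend F K E V)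
    (hW : IsFriend F K E W) (hd : Module.finrank F V = Module.finrank F W) (hne : V ≠ W) :
    2 * Module.finrank F E ≤ sdist F V W := by
  have hI : IsFriend F K E (V ⊓ W) := fun c hc u hu => ⟨hV c hc u hu.1, hW c hc u hu.2⟩
  have hlt : V ⊓ W < V := by
    refine lt_of_le_of_ne inf_le_left fun h => hne ?_
    exact Submodule.eq_of_le_of_finrank_eq (inf_eq_left.1 h) hd
  have h1 := Submodule.finrank_lt_finrank_of_lt hlt
  have h2 := Nat.le_of_dvd (Nat.sub_pos_of_lt h1) (Nat.dvd_sub hV.finrank_dvd hI.finrank_dvd)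
  unfold sdist
  omega

lemma sdist_le_of_le_sup {F K : Type} [Field F] [Field K] [Algebra F K] [FiniteDimensional F K]
    {V W L : Submodule F K} (hd : Module.finrank F V = Module.finrank F W) (h : W ≤ V ⊔ L) :
    sdist F V W ≤ 2 * Module.finrank F L := by
  have h1 := Submodule.finrank_mono (sup_le le_sup_left h : V ⊔ W ≤ V ⊔ L)
  have h2 := Submodule.finrank_add_le_finrank_add_finrank V L
  have h3 := Submodule.finrank_sup_add_finrank_inf_eq V W
  unfold sdist
  omega

/-- The largest friend of `U`: the field of all `x` with `xU ⊆ U`. It is closed under inverses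
because every element of `K` is algebraic over `F`. -/
noncomputable def multipliers (F K : Type) [Field F] [Field K] [Algebra F K]
    [Algebra.IsAlgebraic F K] (U : Submodule F K) : IntermediateField F K :=
  let A : Subalgebra F K :=
    { carrier := {x | ∀ u ∈ U, x * u ∈ U}
      mul_mem' := fun {a b} ha hb u hu => by
        rw [mul_assoc]; exact ha _ (hb _ hu)
      add_mem' := fun {a b} ha hb u hu => by
        rw [add_mul]; exact U.add_mem (ha _ hu) (hb _ hu)
      algebraMap_mem' := fun c u hu => by
        rw [← Algebra.smul_def]; exact U.smul_mem c hu }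
  A.toIntermediateField fun x hx =>
    A.inv_mem_of_algebraic (x := ⟨x, hx⟩) (Algebra.IsAlgebraic.isAlgebraic x)

lemma mem_multipliers {F K : Type} [Field F] [Field K] [Algebra F K]
    [Algebra.IsAlgebraic F K] {U : Submodule F K} {x : K} :
    x ∈ multipliers F K U ↔ ∀ u ∈ U, x * u ∈ U := Iff.rfl

/-- Let `α` be a primitive element of `F_{q^n}`, `F_{q^r}` a subfield
(realized as the intermediate field `E` with `q^r` elements), `t ≥ 2`, and
`1 ≤ l < (q^n − 1)/(q^r − 1)`.  Suppose `U = ⊕_{i=0}^{t−1} α^{li} F_{q^r}` (an internal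
direct sum of the `F_q`-subspaces `α^{li} F_{q^r}`) and that `F_{q^r}` is the best friend
of `U`.  Then `d_S(orb(U)) = 2r`. -/
theorem stmt10 (q n r t l : ℕ) (F K : Type) [Field F] [Field K] [Finite F] [Finite K]
    [Algebra F K] (hq : Nat.card F = q) (hn : Module.finrank F K = n)
    (α : K) (hα : ∀ x : K, x ≠ 0 → ∃ i : ℕ, x = α ^ i)
    (E : IntermediateField F K) (hEr : Nat.card ↥E = q ^ r)
    (ht : 2 ≤ t) (hl1 : 1 ≤ l) (hl2 : l < (q ^ n - 1) / (q ^ r - 1))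
    (U : Submodule F K)
    (hU : U = ⨆ i : Fin t,
      mulMap F K (α ^ (l * (i : ℕ))) (Subalgebra.toSubmodule E.toSubalgebra))
    (hdirect : iSupIndep fun i : Fin t =>
      mulMap F K (α ^ (l * (i : ℕ))) (Subalgebra.toSubmodule E.toSubalgebra))
    (hfriend : IsFriend F K E U)
    (hbest : ∀ E' : IntermediateField F K, IsFriend F K E' U →
      Nat.card ↥E' ≤ Nat.card ↥E) :
    cdist F (orb F K U) = 2 * r := by
  classical
  have : FiniteDimensional F K := Module.Finite.of_finite
  have : Finite E := inferInstance
  have hq2 : 1 < q := hq ▸ Finite.one_lt_card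
  have hr : Module.finrank F E = r := by
    have h := Module.natCard_eq_pow_finrank (K := F) (V := E)
    rw [hq, hEr] at h
    exact (Nat.pow_right_injective hq2 h).symm
  -- If `α = 0`, then `K` has two elements and the interval for `l` is empty.
  have hα0 : α ≠ 0 := by
    rintro rfl
    have hsub : ∀ x : K, x ≠ 0 → x = 1 := by
      intro x hx
      obtain ⟨i, rfl⟩ := hα x hx
      rcases Nat.eq_zero_or_pos i with rfl | hi
      · simp
      · exact absurd (zero_pow hi.ne') hx
    have hc : Nat.card K ≤ 2 := by
      have hsurj : Function.Surjective (fun b : Bool => if b then (1 : K) else 0) := by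
        intro x
        by_cases hx : x = 0
        · exact ⟨false, by simp [hx]⟩
        · exact ⟨true, by simp [hsub x hx]⟩
      simpa using Nat.card_le_card_of_surjective _ hsurj
    rw [Module.natCard_eq_pow_finrank (K := F) (V := K), hq, hn] at hc
    have := Nat.div_le_self (q ^ n - 1) (q ^ r - 1)
    omega
  set β := α ^ l with hβ
  have hβ0 : β ≠ 0 := pow_ne_zero _ hα0
  set E₀ : Submodule F K := Subalgebra.toSubmodule E.toSubalgebra with hE₀
  have hmemE₀ : ∀ x, x ∈ E₀ ↔ x ∈ E := fun x => Iff.rfl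
  have hne : U ≠ mulMap F K β U := by
    intro hEq
    have hβM : β ∈ multipliers F K U := mem_multipliers.2 fun u hu => by
      rw [hEq]
      exact mem_mulMap.2 ⟨u, hu, mul_comm _ _⟩
    have hEM : E ≤ multipliers F K U := fun c hc => mem_multipliers.2 (hfriend c hc)
    have hcard := hbest (multipliers F K U) fun c hc => mem_multipliers.1 hc
    have hset : (E : Set K) = multipliers F K U :=
      Set.eq_of_subset_of_ncard_le hEM hcard (Set.toFinite _)
    have hβE : β ∈ E := by
      have : β ∈ (E : Set K) := hset ▸ hβM
      exact this
    have hdis := hdirect.pairwiseDisjoint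
      (show (⟨0, by omega⟩ : Fin t) ≠ ⟨1, by omega⟩ by simp)
    have h0 := Submodule.disjoint_def.1 hdis β
      (mem_mulMap.2 ⟨β, hβE, by simp⟩)
      (mem_mulMap.2 ⟨1, E.one_mem, by simp [hβ]⟩)
    exact hβ0 h0
  have hsup : mulMap F K β U ≤ U ⊔ mulMap F K (β ^ t) E₀ := by
    unfold mulMap
    conv_lhs => rw [hU]
    rw [Submodule.map_iSup]
    refine iSup_le fun i => ?_
    rintro x hx
    obtain ⟨y, hy, rfl⟩ := Submodule.mem_map.1 hx
    obtain ⟨e, he, rfl⟩ := mem_mulMap.1 hy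
    have hx' : LinearMap.mulRight F β (e * α ^ (l * (i : ℕ))) = e * β ^ ((i : ℕ) + 1) := by
      rw [LinearMap.mulRight_apply, pow_succ, hβ, ← pow_mul, mul_assoc]
    rw [hx']
    rcases Nat.lt_or_ge ((i : ℕ) + 1) t with hi | hi
    · refine Submodule.mem_sup_left ?_
      rw [hU]
      refine Submodule.mem_iSup_of_mem (⟨i + 1, hi⟩ : Fin t) (mem_mulMap.2 ⟨e, he, ?_⟩)
      rw [hβ, ← pow_mul]
    · have hit : (i : ℕ) + 1 = t := by omega
      rw [hit]
      exact Submodule.mem_sup_right (mem_mulMap.2 ⟨e, he, rfl⟩)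
  have hUorb : U ∈ orb F K U := ⟨1, one_ne_zero, by ext; simp [mem_mulMap]⟩
  have hup : sdist F U (mulMap F K β U) ≤ 2 * r := by
    have h := sdist_le_of_le_sup (finrank_mulMap hβ0 U).symm hsup
    rw [finrank_mulMap (pow_ne_zero _ hβ0)] at h
    exact hr ▸ h
  unfold cdist
  refine le_antisymm (le_trans (Nat.sInf_le ?_) hup) ?_
  · exact ⟨U, hUorb, mulMap F K β U, ⟨β, hβ0, rfl⟩, hne, rfl⟩
  refine le_csInf ?_ ?_
  · exact ⟨_, U, hUorb, mulMap F K β U, ⟨β, hβ0, rfl⟩, hne, rfl⟩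
  rintro d ⟨_, ⟨γ, hγ, rfl⟩, _, ⟨δ, hδ, rfl⟩, hVW, rfl⟩
  rw [← hr]
  exact two_mul_le_sdist (hfriend.mulMap γ) (hfriend.mulMap δ)
    (by rw [finrank_mulMap hγ, finrank_mulMap hδ]) hVW
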